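/- Let σ be a nonempty subset of B such that σ ∪ {a} is an independent set of G_m^d for some a ∈ A. Then there exists s ∈ {1,…,m} with b_s ∈ σ and σ ⊆ B_s. -/

import Mathlib

open Finset

/-- The graph `G_m^d` on vertex set `Fin m ⊕ Fin m` (0-based indexing):
`Sum.inl i` is the vertex `a_{i+1}` and `Sum.inr j` is the vertex `b_{j+1}` of the paper;
`a_i` is adjacent to `b_j` iff `(j - i) mod m ∈ {0, …, d-1}`. -/
def Gmd (m d : ℕ) : SimpleGraph (Fin m ⊕ Fin m) :=
  SimpleGraph.fromRel (fun u v =>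
    ∃ i j : Fin m, u = Sum.inl i ∧ v = Sum.inr j ∧ (j.val + m - i.val) % m < d)

/-- A finite set of vertices is independent iff no two of its elements are adjacent. -/
def IsInd (m d : ℕ) (σ : Finset (Fin m ⊕ Fin m)) : Prop :=
  ∀ u ∈ σ, ∀ v ∈ σ, ¬ (Gmd m d).Adj u v

/-- The face poset `P` of the independence complex `Ind (G_m^d)` (ordered by `⊆`),
including the empty simplex. -/
def faceP (m d : ℕ) : Set (Finset (Fin m ⊕ Fin m)) := {σ | IsInd m d σ}

/-- One step of the matching construction: `S_x(T) = {σ ∈ T | x ∉ σ, σ ∪ {x} ∈ T}`. -/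
def stepS {α : Type*} [DecidableEq α] (x : α) (T : Set (Finset α)) : Set (Finset α) :=
  {σ | σ ∈ T ∧ x ∉ σ ∧ insert x σ ∈ T}

/-- The survivors of one step: `T \ (S_x(T) ∪ μ_x(S_x(T)))`. -/
def stepSurv {α : Type*} [DecidableEq α] (x : α) (T : Set (Finset α)) : Set (Finset α) :=
  T \ (stepS x T ∪ (insert x) '' (stepS x T))

/-- Iterating the matching construction along a list of vertices. -/
def phase {α : Type*} [DecidableEq α] (T : Set (Finset α)) (l : List α) : Set (Finset α) :=
  l.foldl (fun T x => stepSurv x T) T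

/-- The list `a_1, …, a_m`. -/
def listA (m : ℕ) : List (Fin m ⊕ Fin m) := (List.finRange m).map Sum.inl
/-- The list `b_1, …, b_m`. -/
def listB (m : ℕ) : List (Fin m ⊕ Fin m) := (List.finRange m).map Sum.inr

/-- `S_{a_{i+1}}` (0-based `i`): the set matched with `a_{i+1}` at stage `i+1` of phase one. -/
def Sa (m d : ℕ) (i : Fin m) : Set (Finset (Fin m ⊕ Fin m)) :=
  stepS (Sum.inl i) (phase (faceP m d) ((listA m).take i.val))

/-- `M = P \ (S_1 ∪ μ_1(S_1))`, the simplices surviving phase one. -/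
def setM (m d : ℕ) : Set (Finset (Fin m ⊕ Fin m)) := phase (faceP m d) (listA m)

/-- `S_{b_{i+1}}` (0-based `i`): the set matched with `b_{i+1}` at stage `i+1` of phase two. -/
def Sb (m d : ℕ) (i : Fin m) : Set (Finset (Fin m ⊕ Fin m)) :=
  stepS (Sum.inr i) (phase (setM m d) ((listB m).take i.val))

/-- `𝒮_{a_{i+1}} = S_{a_{i+1}} ∪ μ_{a_{i+1}}(S_{a_{i+1}})`. -/
def scriptSa (m d : ℕ) (i : Fin m) : Set (Finset (Fin m ⊕ Fin m)) :=
  Sa m d i ∪ (insert (Sum.inl i)) '' (Sa m d i)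

/-- `𝒮_{b_{i+1}} = S_{b_{i+1}} ∪ μ_{b_{i+1}}(S_{b_{i+1}})`. -/
def scriptSb (m d : ℕ) (i : Fin m) : Set (Finset (Fin m ⊕ Fin m)) :=
  Sb m d i ∪ (insert (Sum.inr i)) '' (Sb m d i)

/-- The critical cells `C = P \ (S ∪ μ(S))`. -/
def setC (m d : ℕ) : Set (Finset (Fin m ⊕ Fin m)) :=
  faceP m d \ ((⋃ i : Fin m, scriptSa m d i) ∪ (⋃ i : Fin m, scriptSb m d i))

/-- The matching relation: `MatchRel σ τ` iff `τ = μ(σ)` for `σ ∈ S = S_1 ∪ S_2`. -/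
def MatchRel (m d : ℕ) (σ τ : Finset (Fin m ⊕ Fin m)) : Prop :=
  (∃ i : Fin m, σ ∈ Sa m d i ∧ τ = insert (Sum.inl i) σ) ∨
  (∃ i : Fin m, σ ∈ Sb m d i ∧ τ = insert (Sum.inr i) σ)

/-- `B_{s+1} = {b_{s+1}, b_{s+2}, …, b_{s+m-d}}` (0-based `s`, subscripts mod `m`). -/
def Bset (m d : ℕ) (s : Fin m) : Finset (Fin m ⊕ Fin m) :=
  (Finset.univ.filter (fun j : Fin m => (j.val + m - s.val) % m < m - d)).image Sum.inr

/-- `b_{n+1} ∈ σ` (0-based subscript `n`). -/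
def hasB (m : ℕ) (σ : Finset (Fin m ⊕ Fin m)) (n : ℕ) : Prop :=
  ∃ j : Fin m, j.val = n ∧ Sum.inr j ∈ σ

/-- `σ ⊆ B`. -/
def onlyB (m : ℕ) (σ : Finset (Fin m ⊕ Fin m)) : Prop :=
  ∀ v ∈ σ, ∃ j : Fin m, v = Sum.inr j

/-- Property `P_l` of the paper, with parameter `j1` (0-based: the paper's `j_1 - 1`, so
`1 ≤ j1 ≤ d`).  With 0-based subscripts `i_r = (r-1)(d+1)`, `j_r = j1 + (r-1)(d+1)` and
`k = m + j1 - (d+1)`:  σ ∈ M, σ ⊆ B, the `2l` smallest subscripts of σ are exactly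
`0 = i_1, j_1, i_2, j_2, …, i_l, j_l`, the largest subscript is `k`, and
`σ \ {b_{i_r}} ∉ M`, `σ \ {b_{j_r}} ∉ M` for all `1 ≤ r ≤ l`. -/
def propP (m d l j1 : ℕ) (σ : Finset (Fin m ⊕ Fin m)) : Prop :=
  σ ∈ setM m d ∧ onlyB m σ ∧ 1 ≤ j1 ∧ j1 ≤ d ∧
  (∀ r, 1 ≤ r → r ≤ l → hasB m σ ((r-1)*(d+1)) ∧ hasB m σ (j1 + (r-1)*(d+1))) ∧
  (∀ j : Fin m, Sum.inr j ∈ σ → j.val ≤ j1 + (l-1)*(d+1) →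
      ∃ r, 1 ≤ r ∧ r ≤ l ∧ (j.val = (r-1)*(d+1) ∨ j.val = j1 + (r-1)*(d+1))) ∧
  hasB m σ (m + j1 - (d+1)) ∧
  (∀ j : Fin m, Sum.inr j ∈ σ → j.val ≤ m + j1 - (d+1)) ∧
  (∀ r, 1 ≤ r → r ≤ l → ∀ j : Fin m,
      (j.val = (r-1)*(d+1) ∨ j.val = j1 + (r-1)*(d+1)) → σ.erase (Sum.inr j) ∉ setM m d)

/-!
Measure subscripts by their cyclic distance from `i`, where `a_i` is the vertex independent of `σ`.
Independence says that every `b_j ∈ σ` is at distance at least `d`, and the `b_s ∈ σ` closest to `i`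
works: the cyclic distance from `s` to any `b_j ∈ σ` is the difference of the distances of `j` and
`s` from `i`, a number below `m` minus a number that is at least `d`.
-/

section CyclicDistance

variable {n : ℕ}

theorem add_sub_mod_eq_val_sub (i j : Fin n) : (j.val + n - i.val) % n = (j - i).val := by
  rw [Fin.val_sub, ← Nat.sub_add_comm i.isLt.le, Nat.add_comm]

theorem val_sub_of_sub_le_sub {i s j : Fin n} (h : s - i ≤ j - i) :
    (j - s).val = (j - i).val - (s - i).val := by
  have := i.neZero
  rw [← sub_sub_sub_cancel_right j s i, Fin.sub_val_of_le h]

theorem exists_mem_forall_val_sub_lt {d : ℕ} {i : Fin n} {τ : Finset (Fin n)}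
    (hτ : τ.Nonempty) (hd : ∀ j ∈ τ, d ≤ (j - i).val) :
    ∃ s ∈ τ, ∀ j ∈ τ, (j - s).val < n - d := by
  obtain ⟨s, hs, hmin⟩ := τ.exists_min_image (· - i) hτ
  refine ⟨s, hs, fun j hj ↦ ?_⟩
  calc (j - s).val = (j - i).val - (s - i).val := val_sub_of_sub_le_sub (hmin j hj)
    _ ≤ (j - i).val - d := Nat.sub_le_sub_left (hd s hs) _
    _ < n - d := Nat.sub_lt_sub_right (hd j hj) (j - i).isLt

end CyclicDistance

section Gmd

variable {m d : ℕ} {σ : Finset (Fin m ⊕ Fin m)}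

theorem Gmd_adj_inl_inr {i j : Fin m} :
    (Gmd m d).Adj (Sum.inl i) (Sum.inr j) ↔ (j - i).val < d := by
  simp [Gmd, add_sub_mod_eq_val_sub]

theorem inr_mem_Bset {s j : Fin m} : Sum.inr j ∈ Bset m d s ↔ (j - s).val < m - d := by
  simp [Bset, add_sub_mod_eq_val_sub]

theorem IsInd.le_val_sub (hσ : IsInd m d σ) {i j : Fin m} (hi : Sum.inl i ∈ σ)
    (hj : Sum.inr j ∈ σ) : d ≤ (j - i).val :=
  not_lt.1 fun hlt ↦ hσ _ hi _ hj (Gmd_adj_inl_inr.2 hlt)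

theorem onlyB.toRight_nonempty (hB : onlyB m σ) (hne : σ.Nonempty) : σ.toRight.Nonempty := by
  obtain ⟨v, hv⟩ := hne
  obtain ⟨j, rfl⟩ := hB v hv
  exact ⟨j, mem_toRight.2 hv⟩

theorem onlyB.subset_Bset_iff (hB : onlyB m σ) {s : Fin m} :
    σ ⊆ Bset m d s ↔ ∀ j ∈ σ.toRight, (j - s).val < m - d := by
  refine ⟨fun h j hj ↦ inr_mem_Bset.1 (h (mem_toRight.1 hj)), fun h v hv ↦ ?_⟩
  obtain ⟨j, rfl⟩ := hB v hv
  exact inr_mem_Bset.2 (h j (mem_toRight.2 hv))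

end Gmd

/-- if `σ` is a nonempty subset of `B` and `σ ∪ {a}` is independent for
some `a ∈ A`, then there is `s` with `b_s ∈ σ` and `σ ⊆ B_s`. -/
theorem stmt4 (m d : ℕ) (hd : 1 ≤ d) (hdm : d ≤ m)
    (σ : Finset (Fin m ⊕ Fin m)) (hne : σ.Nonempty) (hB : onlyB m σ)
    (h : ∃ i : Fin m, IsInd m d (insert (Sum.inl i) σ)) :
    ∃ s : Fin m, Sum.inr s ∈ σ ∧ σ ⊆ Bset m d s := by
  obtain ⟨i, hi⟩ := h
  have hdist : ∀ j ∈ σ.toRight, d ≤ (j - i).val := fun j hj ↦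
    hi.le_val_sub (mem_insert_self _ σ) (mem_insert_of_mem (mem_toRight.1 hj))
  obtain ⟨s, hs, hlt⟩ := exists_mem_forall_val_sub_lt (hB.toRight_nonempty hne) hdist
  exact ⟨s, mem_toRight.1 hs, hB.subset_Bset_iff.2 hlt⟩
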